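/- arXiv:1207.3739 — 2 statements merged into one kernel-verified Lean document; each statement's English description precedes it below -/
import Mathlib

section
/- A finite-dimensional left Leibniz algebra A is nilpotent if and only if the only subalgebra K of A with K + A² = A is K = A itself. -/
open Polynomial LinearMap

/-- A (left) Leibniz algebra structure on the `K`-vector space `A`:
a bilinear multiplication satisfying `x(yz) = (xy)z + y(xz)`. -/
structure LeibnizMul (K A : Type*) [Field K] [AddCommGroup A] [Module K A] where
  mul : A →ₗ[K] A →ₗ[K] A
  leibniz : ∀ x y z, mul x (mul y z) = mul (mul x y) z + mul y (mul x z)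

namespace LeibnizMul

variable {K A : Type*} [Field K] [AddCommGroup A] [Module K A]

/-- The product of two subspaces: the span of all products `s·t`, `s ∈ S`, `t ∈ T`. -/
def mulSub (m : LeibnizMul K A) (S T : Submodule K A) : Submodule K A :=
  Submodule.span K (Set.image2 (fun x y => m.mul x y) (S : Set A) (T : Set A))

/-- Relative lower central series of the subalgebra `S`: `lcsIn m S n = S^(n+1)`,
i.e. `lcsIn m S 0 = S` and `lcsIn m S (n+1) = S · (lcsIn m S n)`. -/
def lcsIn (m : LeibnizMul K A) (S : Submodule K A) : ℕ → Submodule K A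
  | 0 => S
  | (n+1) => m.mulSub S (m.lcsIn S n)

/-- `A` is nilpotent: some term of the lower central series vanishes. -/
def IsNilpotent (m : LeibnizMul K A) : Prop := ∃ n, m.lcsIn ⊤ n = ⊥

/-- `S` is a subalgebra: a subspace closed under multiplication. -/
def IsSubalg (m : LeibnizMul K A) (S : Submodule K A) : Prop :=
  ∀ x ∈ S, ∀ y ∈ S, m.mul x y ∈ S

/-- `S` is a (two-sided) ideal. -/
def IsIdeal (m : LeibnizMul K A) (S : Submodule K A) : Prop :=
  ∀ (x : A), ∀ y ∈ S, m.mul x y ∈ S ∧ m.mul y x ∈ S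

/-- `M` is a maximal (proper) subalgebra. -/
def IsMaxSubalg (m : LeibnizMul K A) (M : Submodule K A) : Prop :=
  m.IsSubalg M ∧ M ≠ ⊤ ∧ ∀ S, m.IsSubalg S → M < S → S = ⊤

/-- The Frattini subalgebra: the intersection of all maximal subalgebras. -/
def frattini (m : LeibnizMul K A) : Submodule K A :=
  sInf {M | m.IsMaxSubalg M}

/-- The subalgebra generated by a single element `a`. -/
def subalgGen (m : LeibnizMul K A) (a : A) : Submodule K A :=
  sInf {S | m.IsSubalg S ∧ a ∈ S}

/-- The normal closure of a subspace: the smallest ideal containing it. -/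
def normalClosure (m : LeibnizMul K A) (S : Submodule K A) : Submodule K A :=
  sInf {I | m.IsIdeal I ∧ S ≤ I}

/-- The normalizer of a subspace `C`: all `x` with `x·c ∈ C` and `c·x ∈ C` for all `c ∈ C`. -/
def normalizer (m : LeibnizMul K A) (C : Submodule K A) : Submodule K A :=
  ⨅ c : C, (Submodule.comap (m.mul.flip (c : A)) C ⊓ Submodule.comap (m.mul (c : A)) C)

/-- The center of the subalgebra `S`: all `z ∈ S` with `z·x = x·z = 0` for all `x ∈ S`. -/
def centerIn (m : LeibnizMul K A) (S : Submodule K A) : Submodule K A :=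
  S ⊓ ⨅ x : S, (LinearMap.ker (m.mul.flip (x : A)) ⊓ LinearMap.ker (m.mul (x : A)))

/-- All `z ∈ S` with `z·x ∈ T` and `x·z ∈ T` for all `x ∈ S`. -/
def relCentralizer (m : LeibnizMul K A) (S T : Submodule K A) : Submodule K A :=
  S ⊓ ⨅ x : S, (Submodule.comap (m.mul.flip (x : A)) T ⊓ Submodule.comap (m.mul (x : A)) T)

/-- The upper central series of the subalgebra `S`:
`Z₀ = 0`, `Z_{j+1} = {z ∈ S : zS ⊆ Z_j and Sz ⊆ Z_j}`. -/
def ucsIn (m : LeibnizMul K A) (S : Submodule K A) : ℕ → Submodule K A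
  | 0 => ⊥
  | (j+1) => m.relCentralizer S (m.ucsIn S j)

/-- The right center `{r : A·r = 0}`. -/
def rightCenter (m : LeibnizMul K A) : Submodule K A := LinearMap.ker m.mul.flip

/-- Left-normed powers of `a`: `lpow m a k = a^(k+1)`. -/
def lpow (m : LeibnizMul K A) (a : A) : ℕ → A
  | 0 => a
  | (k+1) => m.mul a (m.lpow a k)

/-- The Fitting null component of left multiplication by `a`. -/
def fittingNull (m : LeibnizMul K A) (a : A) : Submodule K A :=
  ⨆ k, LinearMap.ker ((m.mul a) ^ k)

end LeibnizMul

namespace LeibnizMul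

variable {K A : Type*} [Field K] [AddCommGroup A] [Module K A]

theorem mul_mem_mulSub (m : LeibnizMul K A) {S T : Submodule K A} {x y : A}
    (hx : x ∈ S) (hy : y ∈ T) : m.mul x y ∈ m.mulSub S T :=
  Submodule.subset_span ⟨x, hx, y, hy, rfl⟩

theorem mulSub_le (m : LeibnizMul K A) {S T U : Submodule K A} :
    m.mulSub S T ≤ U ↔ ∀ x ∈ S, ∀ y ∈ T, m.mul x y ∈ U := by
  simp [mulSub, Submodule.span_le, Set.image2_subset_iff]

theorem mul_mem_lcsIn_top (m : LeibnizMul K A) (n : ℕ) : ∀ (k : ℕ) {x y : A},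
    x ∈ m.lcsIn ⊤ n → y ∈ m.lcsIn ⊤ k → m.mul x y ∈ m.lcsIn ⊤ (n + k + 1) := by
  induction n with
  | zero =>
    intro k x y _ hy
    rw [Nat.zero_add]
    exact m.mul_mem_mulSub Submodule.mem_top hy
  | succ n ih =>
    intro k x y hx hy
    have hle : m.lcsIn ⊤ (n + 1) ≤ (m.lcsIn ⊤ (n + 1 + k + 1)).comap (m.mul.flip y) := by
      refine m.mulSub_le.2 fun u _ v hv => ?_
      rw [Submodule.mem_comap, LinearMap.flip_apply,
        eq_sub_of_add_eq (m.leibniz u v y).symm, show n + 1 + k + 1 = n + k + 1 + 1 by omega]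
      exact sub_mem (m.mul_mem_mulSub Submodule.mem_top (ih k hv hy))
        (ih (k + 1) hv (m.mul_mem_mulSub Submodule.mem_top hy))
    exact hle hx

theorem IsSubalg.sup_lcsIn_top_eq_top {m : LeibnizMul K A} {S : Submodule K A}
    (hS : m.IsSubalg S) (h : S ⊔ m.mulSub ⊤ ⊤ = ⊤) (n : ℕ) : S ⊔ m.lcsIn ⊤ n = ⊤ := by
  induction n with
  | zero => exact sup_top_eq S
  | succ n ih =>
    refine top_le_iff.1 (h.ge.trans (sup_le le_sup_left (m.mulSub_le.2 fun a _ b _ => ?_)))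
    obtain ⟨s, hs, u, hu, rfl⟩ := Submodule.mem_sup.1 (ih.ge (Submodule.mem_top (x := a)))
    obtain ⟨t, ht, v, hv, rfl⟩ := Submodule.mem_sup.1 (ih.ge (Submodule.mem_top (x := b)))
    rw [LinearMap.map_add₂, map_add, add_assoc]
    refine Submodule.add_mem_sup (hS s hs t ht) (add_mem ?_ ?_)
    · exact m.mul_mem_mulSub Submodule.mem_top hv
    · exact m.mul_mem_lcsIn_top n 0 hu Submodule.mem_top

theorem pow_mul_left_apply_mul_eq_zero (m : LeibnizMul K A) (a : A) (k l : ℕ) {x y : A}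
    (hx : (m.mul a ^ k) x = 0) (hy : (m.mul a ^ l) y = 0) :
    (m.mul a ^ (k + l)) (m.mul x y) = 0 := by
  induction k generalizing l x y with
  | zero =>
    obtain rfl : x = 0 := by simpa using hx
    simp
  | succ k ihk =>
    induction l generalizing x y with
    | zero =>
      obtain rfl : y = 0 := by simpa using hy
      simp
    | succ l ihl =>
      rw [← Nat.add_assoc, pow_succ, Module.End.mul_apply, m.leibniz, map_add, ihl hx, add_zero,
        Nat.add_right_comm]
      · exact ihk (l + 1) (by simpa [pow_succ] using hx) hy
      · simpa [pow_succ] using hy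

theorem isSubalg_fittingNull [FiniteDimensional K A] (m : LeibnizMul K A) (a : A) :
    m.IsSubalg (m.fittingNull a) := by
  obtain ⟨n, hn⟩ := (m.mul a).eventually_iSup_ker_pow_eq.exists
  intro x hx y hy
  rw [fittingNull, hn] at hx hy
  exact Submodule.mem_iSup_of_mem (n + n) (m.pow_mul_left_apply_mul_eq_zero a n n hx hy)

theorem fittingNull_sup_mulSub_top_eq_top [FiniteDimensional K A] (m : LeibnizMul K A) (a : A) :
    m.fittingNull a ⊔ m.mulSub ⊤ ⊤ = ⊤ := by
  refine top_le_iff.1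
    ((m.mul a).isCompl_iSup_ker_pow_iInf_range_pow.sup_eq_top.ge.trans (sup_le_sup le_rfl ?_))
  refine (iInf_le _ 1).trans ?_
  rintro _ ⟨y, rfl⟩
  rw [pow_one]
  exact m.mul_mem_mulSub Submodule.mem_top Submodule.mem_top

theorem isNilpotent_mul_of_fittingNull_eq_top [FiniteDimensional K A] (m : LeibnizMul K A) {a : A}
    (h : m.fittingNull a = ⊤) : _root_.IsNilpotent (m.mul a) := by
  obtain ⟨n, hn⟩ := (m.mul a).eventually_iSup_ker_pow_eq.exists
  exact ⟨n, LinearMap.ker_eq_top.1 (hn.symm.trans h)⟩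

attribute [local instance] LieRing.ofAssociativeRing

/-- The left multiplications form a Lie subalgebra of the endomorphisms of `A`. -/
def mulRange (m : LeibnizMul K A) : LieSubalgebra K (Module.End K A) where
  __ := LinearMap.range m.mul
  lie_mem' := by
    rintro _ _ ⟨x, rfl⟩ ⟨y, rfl⟩
    refine ⟨m.mul x y, LinearMap.ext fun z => ?_⟩
    rw [Ring.lie_def, LinearMap.sub_apply, Module.End.mul_apply, Module.End.mul_apply,
      m.leibniz x y z, add_sub_cancel_right]

theorem lcsIn_top_le_lowerCentralSeries (m : LeibnizMul K A) (n : ℕ) :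
    m.lcsIn ⊤ n ≤ (LieModule.lowerCentralSeries K m.mulRange A n).toSubmodule := by
  induction n with
  | zero => exact le_top
  | succ n ih =>
    refine m.mulSub_le.2 fun x _ y hy => ?_
    rw [LieModule.lowerCentralSeries_succ]
    exact LieSubmodule.lie_mem_lie (x := (⟨m.mul x, x, rfl⟩ : m.mulRange))
      (LieSubmodule.mem_top _) (ih hy)

/-- Engel's theorem for left Leibniz algebras. -/
theorem isNilpotent_of_forall_isNilpotent_mul [FiniteDimensional K A] (m : LeibnizMul K A)
    (h : ∀ a, _root_.IsNilpotent (m.mul a)) : m.IsNilpotent := by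
  have hnil : LieModule.IsNilpotent m.mulRange A := by
    rw [LieModule.isNilpotent_iff_forall (R := K)]
    rintro ⟨_, a, rfl⟩
    exact h a
  obtain ⟨n, hn⟩ := (LieModule.isNilpotent_iff K m.mulRange A).1 hnil
  refine ⟨n, le_bot_iff.1 ((m.lcsIn_top_le_lowerCentralSeries n).trans ?_)⟩
  rw [hn, LieSubmodule.bot_toSubmodule]

end LeibnizMul

/-- `A` is nilpotent iff the only subalgebra `S` with `S + A² = A` is `S = A`. -/
theorem stmt2 {K A : Type*} [Field K] [AddCommGroup A] [Module K A] [FiniteDimensional K A]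
    (m : LeibnizMul K A) :
    m.IsNilpotent ↔ ∀ S : Submodule K A, m.IsSubalg S → S ⊔ m.mulSub ⊤ ⊤ = ⊤ → S = ⊤ := by
  refine ⟨fun ⟨n, hn⟩ S hS h => ?_, fun h => ?_⟩
  · simpa [hn] using hS.sup_lcsIn_top_eq_top h n
  · exact m.isNilpotent_of_forall_isNilpotent_mul fun a =>
      m.isNilpotent_mul_of_fittingNull_eq_top
        (h _ (m.isSubalg_fittingNull a) (m.fittingNull_sup_mulSub_top_eq_top a))
end

section
/- Let A be an n-dimensional cyclic left Leibniz algebra generated by a, with characteristic polynomial p(x) = p₁(x)^{n₁}···p_s(x)^{n_s} of L_a, where p_j are distinct irreducibles. Then the maximal subalgebras of A are precisely the null spaces of r_j(L_a), where r_j(x) = p(x)/p_j(x), for j = 1, ..., s. -/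
open Polynomial LinearMap

namespace LeibnizMul

variable {K A : Type*} [Field K] [AddCommGroup A] [Module K A]

/-- Left multiplication by a product is the commutator of the left multiplications. -/
theorem mul_mul_apply (m : LeibnizMul K A) (x y z : A) :
    m.mul (m.mul x y) z = m.mul x (m.mul y z) - m.mul y (m.mul x z) := by
  rw [m.leibniz x y z, add_sub_cancel_right]

/-- Left multiplication by `f(L_a) a` is `f(0) • L_a`. -/
theorem mul_aeval_apply (m : LeibnizMul K A) (a : A) (f : K[X]) :
    m.mul (aeval (m.mul a) f a) = f.coeff 0 • m.mul a := by
  induction f using Polynomial.induction_on with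
  | C c => simp [Algebra.algebraMap_eq_smul_one]
  | add f g hf hg => simp [hf, hg, add_smul]
  | monomial n c ih =>
    have h : aeval (m.mul a) (C c * X ^ (n + 1)) a
        = m.mul a (aeval (m.mul a) (C c * X ^ n) a) := by
      rw [pow_succ', mul_left_comm, map_mul, aeval_X, Module.End.mul_apply]
    ext z
    rw [h, mul_mul_apply, ih]
    simp only [LinearMap.smul_apply, map_smul, sub_self]
    simp

/-- A Leibniz algebra generated by `a` is cyclic as a module over `K[L_a]`. -/
theorem exists_aeval_apply_eq (m : LeibnizMul K A) {a : A} (hcyc : m.subalgGen a = ⊤) (x : A) :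
    ∃ f : K[X], aeval (m.mul a) f a = x := by
  let B : Submodule K A :=
    LinearMap.range ((LinearMap.applyₗ a) ∘ₗ (aeval (R := K) (m.mul a)).toLinearMap)
  have hB : m.IsSubalg B := by
    rintro _ ⟨f, rfl⟩ _ ⟨g, rfl⟩
    refine ⟨C (f.coeff 0) * (X * g), ?_⟩
    simp [mul_aeval_apply, Algebra.algebraMap_eq_smul_one]
  have ha : a ∈ B := ⟨1, by simp⟩
  have hx : x ∈ m.subalgGen a := hcyc ▸ Submodule.mem_top
  obtain ⟨f, hf⟩ := (Submodule.mem_sInf.1 hx) B ⟨hB, ha⟩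
  exact ⟨f, hf⟩

theorem exists_mul_eq_smul (m : LeibnizMul K A) {a : A} (hcyc : m.subalgGen a = ⊤) (x : A) :
    ∃ c : K, m.mul x = c • m.mul a := by
  obtain ⟨f, rfl⟩ := m.exists_aeval_apply_eq hcyc x
  exact ⟨_, m.mul_aeval_apply a f⟩

theorem isSubalg_of_invariant (m : LeibnizMul K A) {a : A} (hcyc : m.subalgGen a = ⊤)
    {S : Submodule K A} (hS : ∀ y ∈ S, m.mul a y ∈ S) : m.IsSubalg S := by
  intro x _ y hy
  obtain ⟨c, hc⟩ := m.exists_mul_eq_smul hcyc x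
  rw [hc]
  exact S.smul_mem c (hS y hy)

/-- Every proper subalgebra of a cyclic Leibniz algebra lies in a proper `L_a`-invariant
subspace. -/
theorem exists_invariant_ge (m : LeibnizMul K A) {a : A} (hcyc : m.subalgGen a = ⊤)
    {S : Submodule K A} (hS : m.IsSubalg S) (hne : S ≠ ⊤) :
    ∃ N : Submodule K A, S ≤ N ∧ N ≠ ⊤ ∧ ∀ y ∈ N, m.mul a y ∈ N := by
  by_cases hinv : ∀ y ∈ S, m.mul a y ∈ S
  · exact ⟨S, le_rfl, hne, hinv⟩
  refine ⟨LinearMap.ker m.mul, fun x hx => ?_, fun htop => hinv fun y _ => ?_, fun y _ => ?_⟩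
  · obtain ⟨c, hc⟩ := m.exists_mul_eq_smul hcyc x
    rw [LinearMap.mem_ker, hc]
    by_cases h0 : c = 0
    · simp [h0]
    refine absurd (fun y hy => ?_) hinv
    have h := S.smul_mem c⁻¹ (hS x hx y hy)
    rwa [hc, LinearMap.smul_apply, inv_smul_smul₀ h0] at h
  · have h : a ∈ LinearMap.ker m.mul := htop ▸ Submodule.mem_top
    rw [LinearMap.mem_ker.1 h]
    exact S.zero_mem
  · obtain ⟨c, hc⟩ := m.exists_mul_eq_smul hcyc y
    rw [LinearMap.mem_ker]
    ext z
    rw [mul_mul_apply, hc]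
    simp

end LeibnizMul

section CyclicVector

variable {K A : Type*} [Field K] [AddCommGroup A] [Module K A]

theorem aeval_eq_zero_of_apply_cyclic_eq_zero {T : A →ₗ[K] A} {a : A}
    (hT : ∀ x, ∃ f : K[X], aeval T f a = x) {f : K[X]} (hf : aeval T f a = 0) :
    aeval T f = 0 := by
  ext x
  obtain ⟨g, rfl⟩ := hT x
  rw [← Module.End.mul_apply, ← map_mul, mul_comm, map_mul, Module.End.mul_apply, hf]
  simp

variable [FiniteDimensional K A]

theorem finrank_le_natDegree_minpoly_of_cyclic {T : A →ₗ[K] A} {a : A}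
    (hT : ∀ x, ∃ f : K[X], aeval T f a = x) :
    Module.finrank K A ≤ (minpoly K T).natDegree := by
  have hq : (minpoly K T).Monic := minpoly.monic (Algebra.IsIntegral.isIntegral T)
  let φ : degreeLT K (minpoly K T).natDegree →ₗ[K] A :=
    ((LinearMap.applyₗ a) ∘ₗ (aeval (R := K) T).toLinearMap) ∘ₗ Submodule.subtype _
  have hφ : Function.Surjective φ := by
    intro x
    obtain ⟨f, rfl⟩ := hT x
    refine ⟨⟨f %ₘ minpoly K T, mem_degreeLT.2 ?_⟩, ?_⟩
    · rw [← degree_eq_natDegree hq.ne_zero]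
      exact degree_modByMonic_lt f hq
    · change aeval T (f %ₘ minpoly K T) a = _
      rw [minpoly.aeval_modByMonic_minpoly]
  have : FiniteDimensional K (degreeLT K (minpoly K T).natDegree) :=
    Module.Finite.equiv (degreeLTEquiv K _).symm
  calc Module.finrank K A ≤ Module.finrank K (degreeLT K (minpoly K T).natDegree) :=
        LinearMap.finrank_le_finrank_of_surjective hφ
    _ = (minpoly K T).natDegree := by
        rw [(degreeLTEquiv K _).finrank_eq, Module.finrank_fin_fun]

/-- The annihilator of a cyclic vector is generated by the characteristic polynomial. -/
theorem charpoly_dvd_of_apply_cyclic_eq_zero {T : A →ₗ[K] A} {a : A}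
    (hT : ∀ x, ∃ f : K[X], aeval T f a = x) {f : K[X]} (hf : aeval T f a = 0) :
    T.charpoly ∣ f := by
  have hq : (minpoly K T).Monic := minpoly.monic (Algebra.IsIntegral.isIntegral T)
  have h : T.charpoly = minpoly K T :=
    eq_of_monic_of_dvd_of_natDegree_le hq T.charpoly_monic (minpoly_dvd_charpoly T)
      (T.charpoly_natDegree ▸ finrank_le_natDegree_minpoly_of_cyclic hT)
  rw [h]
  exact minpoly.dvd K T (aeval_eq_zero_of_apply_cyclic_eq_zero hT hf)

theorem aeval_ker_ne_top_of_cyclic {T : A →ₗ[K] A} {a : A}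
    (hT : ∀ x, ∃ f : K[X], aeval T f a = x) {q r : K[X]} (hq : ¬ IsUnit q)
    (h : q * r = T.charpoly) : LinearMap.ker (aeval T r) ≠ ⊤ := by
  intro htop
  have ha : a ∈ LinearMap.ker (aeval T r) := htop ▸ Submodule.mem_top
  have hdvd := charpoly_dvd_of_apply_cyclic_eq_zero hT (LinearMap.mem_ker.1 ha)
  have hr : r ≠ 0 := right_ne_zero_of_mul (h ▸ T.charpoly_monic.ne_zero)
  rw [← h] at hdvd
  exact hq (isUnit_of_dvd_one
    ((mul_dvd_mul_iff_right hr).1 (by rwa [one_mul])))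

/-- For a cyclic endomorphism, every proper invariant subspace lies in the kernel of `r(T)` for
some cofactor `r` of an irreducible factor `q` of the characteristic polynomial. -/
theorem exists_irreducible_le_ker_of_cyclic {T : A →ₗ[K] A} {a : A}
    (hT : ∀ x, ∃ f : K[X], aeval T f a = x) {N : Submodule K A} (hN : N ≠ ⊤)
    (hinv : ∀ y ∈ N, T y ∈ N) :
    ∃ q : K[X], Irreducible q ∧ q ∣ T.charpoly ∧
      ∀ r, q * r = T.charpoly → N ≤ LinearMap.ker (aeval T r) := by
  have hpoly : ∀ (f : K[X]), ∀ y ∈ N, aeval T f y ∈ N := fun f y hy => by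
    induction f using Polynomial.induction_on generalizing y with
    | C c => simpa [Algebra.algebraMap_eq_smul_one] using N.smul_mem c hy
    | add f g hf hg => simpa using N.add_mem (hf y hy) (hg y hy)
    | monomial n c ih =>
      rw [pow_succ, ← mul_assoc, map_mul, aeval_X, Module.End.mul_apply]
      exact ih _ (hinv y hy)
  let I : Ideal K[X] :=
    { carrier := {f | aeval T f a ∈ N}
      add_mem' := fun {f g} hf hg => by simpa using N.add_mem hf hg
      zero_mem' := by simp
      smul_mem' := fun c f hf => by
        simpa [smul_eq_mul] using hpoly c _ hf }
  obtain ⟨g, hg⟩ : ∃ g, I = Ideal.span {g} := (IsPrincipalIdealRing.principal I).principal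
  have hmem : ∀ f, aeval T f a ∈ N ↔ g ∣ f := fun f => by
    rw [← Ideal.mem_span_singleton, ← hg]
    rfl
  have hgp : g ∣ T.charpoly := (hmem _).1 (by simp [LinearMap.aeval_self_charpoly])
  have hgu : ¬ IsUnit g := fun hu => hN <| (Submodule.eq_top_iff').2 fun x => by
    obtain ⟨f, rfl⟩ := hT x
    exact (hmem f).2 hu.dvd
  obtain ⟨q, hq, hqg⟩ := WfDvdMonoid.exists_irreducible_factor hgu
    (ne_zero_of_dvd_ne_zero T.charpoly_monic.ne_zero hgp)
  refine ⟨q, hq, hqg.trans hgp, fun r hr x hx => ?_⟩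
  obtain ⟨f, rfl⟩ := hT x
  obtain ⟨k, rfl⟩ := hqg.trans ((hmem f).1 hx)
  rw [LinearMap.mem_ker, ← Module.End.mul_apply, ← map_mul,
    show r * (q * k) = k * (q * r) by ring, hr, map_mul, LinearMap.aeval_self_charpoly]
  simp

end CyclicVector

/-- for a cyclic Leibniz algebra generated by `a` with
`charpoly(L_a) = p₁^{n₁} ⋯ p_s^{n_s}`, the maximal subalgebras are exactly the
null spaces of `r_j(L_a)` where `r_j = p/p_j`. -/
theorem stmt11 {K A : Type*} [Field K] [AddCommGroup A] [Module K A] [FiniteDimensional K A]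
    (m : LeibnizMul K A) (a : A) (hcyc : m.subalgGen a = ⊤)
    (s : ℕ) (p : Fin s → Polynomial K) (e : Fin s → ℕ)
    (hirr : ∀ j, Irreducible (p j)) (hmonic : ∀ j, (p j).Monic)
    (hdist : Function.Injective p) (hpos : ∀ j, 1 ≤ e j)
    (hfact : LinearMap.charpoly (m.mul a) = ∏ j, p j ^ e j) :
    ∀ M : Submodule K A,
      m.IsMaxSubalg M ↔
        ∃ j : Fin s,
          M = LinearMap.ker
            (Polynomial.aeval (m.mul a)
              (∏ k, p k ^ (e k - if k = j then 1 else 0))) := by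
  have hT := m.exists_aeval_apply_eq hcyc
  set T := m.mul a
  set r : Fin s → K[X] := fun j => ∏ k, p k ^ (e k - if k = j then 1 else 0) with hr
  have hpr : ∀ j, p j * r j = T.charpoly := fun j => by
    have hp : p j = ∏ k, p k ^ (if k = j then 1 else 0) := by
      simp [pow_ite, Finset.prod_ite_eq']
    rw [hfact]
    nth_rewrite 1 [hp]
    rw [hr, ← Finset.prod_mul_distrib]
    refine Finset.prod_congr rfl fun k _ => ?_
    rw [← pow_add]
    congr 1
    have := hpos k
    split_ifs <;> omega
  have hsub : ∀ j, m.IsSubalg (LinearMap.ker (aeval T (r j))) := fun j =>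
    m.isSubalg_of_invariant hcyc fun y hy => by
      change aeval T (r j) (T y) = 0
      have h : aeval T (r j * X) y = aeval T (X * r j) y := by rw [mul_comm]
      simpa [LinearMap.mem_ker.1 hy] using h
  have hproper : ∀ j, LinearMap.ker (aeval T (r j)) ≠ ⊤ := fun j =>
    aeval_ker_ne_top_of_cyclic hT (hirr j).not_isUnit (hpr j)
  have hcover : ∀ S, m.IsSubalg S → S ≠ ⊤ → ∃ j, S ≤ LinearMap.ker (aeval T (r j)) := by
    intro S hS hne
    obtain ⟨N, hSN, hN, hinv⟩ := m.exists_invariant_ge hcyc hS hne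
    obtain ⟨q, hq, hqp, hle⟩ := exists_irreducible_le_ker_of_cyclic hT hN hinv
    rw [hfact] at hqp
    obtain ⟨j, -, hj⟩ := (hq.prime.dvd_finsetProd_iff _).1 hqp
    obtain ⟨u, hu⟩ := hq.associated_of_dvd (hirr j) (hq.prime.dvd_of_dvd_pow hj)
    refine ⟨j, fun x hx => ?_⟩
    have h := hle ((u : K[X]) * r j) (by rw [← mul_assoc, hu, hpr]) (hSN hx)
    have h' : aeval T ((↑u⁻¹ : K[X]) * ((u : K[X]) * r j)) x = 0 := by
      rw [map_mul, Module.End.mul_apply, LinearMap.mem_ker.1 h, map_zero]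
    rwa [Units.inv_mul_cancel_left] at h'
  have hanti : ∀ i j, LinearMap.ker (aeval T (r j)) ≤ LinearMap.ker (aeval T (r i)) → j = i := by
    intro i j hle
    have hmem : aeval T (p j) a ∈ LinearMap.ker (aeval T (r j)) := by
      rw [LinearMap.mem_ker, ← Module.End.mul_apply, ← map_mul, mul_comm, hpr,
        LinearMap.aeval_self_charpoly, LinearMap.zero_apply]
    have h := LinearMap.mem_ker.1 (hle hmem)
    rw [← Module.End.mul_apply, ← map_mul, mul_comm] at h
    have hdvd := charpoly_dvd_of_apply_cyclic_eq_zero hT h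
    have hri : r i ≠ 0 := right_ne_zero_of_mul ((hpr i).symm ▸ T.charpoly_monic.ne_zero)
    rw [← hpr i, mul_dvd_mul_iff_right hri] at hdvd
    exact (hdist (eq_of_monic_of_associated (hmonic i) (hmonic j)
      ((hirr i).associated_of_dvd (hirr j) hdvd))).symm
  intro M
  constructor
  · rintro ⟨hM, hne, hmax⟩
    obtain ⟨j, hj⟩ := hcover M hM hne
    refine ⟨j, hj.eq_of_not_lt fun hlt => hproper j (hmax _ (hsub j) hlt)⟩
  · rintro ⟨j, rfl⟩
    refine ⟨hsub j, hproper j, fun S hS hlt => ?_⟩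
    by_contra hne
    obtain ⟨i, hi⟩ := hcover S hS hne
    obtain rfl := hanti i j (hlt.le.trans hi)
    exact hlt.not_ge hi
end
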